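/- Let λ_1, …, λ_{2n} be positive reals with λ_i λ_{i'} = 1 for all i. Then the following identity holds: (1/4) Σ_{k=1}^{2n} Σ_{i ≠ k} [λ_i (1 − λ_k²)(1 + 3δ_{i k'})] / [(1 + λ_k²)(λ_i + λ_{i'})] = Σ_{k odd} (1 − λ_k²)²/(1 + λ_k²)², where δ_{i k'} = 1 if i = k' and 0 otherwise. (This is the simplification of the ambient curvature term 𝓑/ *Ω in the evolution equation of *Ω when both factors are ℂP^n with the Fubini–Study metric.) -/

import Mathlib

/-!
Put `a k = (1 - λ_k²) / (1 + λ_k²)`. The pairing condition gives `a k' = -a k` and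
`λ_i / (λ_i + λ_{i'}) = (1 - a i) / 2`. Hence, with `S = ∑ i, (1 - a i) / 2`, the inner sum is
`a k * (S - (1 - a k) / 2 + 3 * (1 - a k') / 2) = (S + 1) * a k + 2 * a k ^ 2`.
Summing over `k`, the linear term vanishes since `a` is odd under the involution `k ↦ k'`, and
`∑ k, a k ^ 2` is twice the sum over one representative of each pair `{k, k'}`.
-/

open Finset

/-- The involution `i ↦ i'` on `Fin (2n)` (0-indexed: `i' = i+1` for even `i`,
`i' = i−1` for odd `i`). -/
def pr (n : ℕ) (i : Fin (2 * n)) : Fin (2 * n) :=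
  if _h : (i : ℕ) % 2 = 0 then ⟨(i : ℕ) + 1, by have := i.isLt; omega⟩
  else ⟨(i : ℕ) - 1, by have := i.isLt; omega⟩

lemma pr_pr (n : ℕ) (i : Fin (2 * n)) : pr n (pr n i) = i := by
  ext
  by_cases h : (i : ℕ) % 2 = 0
  · have h' : ¬ ((i : ℕ) + 1) % 2 = 0 := by omega
    simp [pr, h, h']
  · have h' : ((i : ℕ) - 1) % 2 = 0 := by omega
    simp only [pr, h, h', dite_true, dite_false]
    omega

lemma pr_ne (n : ℕ) (i : Fin (2 * n)) : pr n i ≠ i := by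
  intro h
  have h := congrArg Fin.val h
  unfold pr at h
  split_ifs at h <;> simp at h
  omega

lemma pr_parity (n : ℕ) (i : Fin (2 * n)) :
    (pr n i : ℕ) % 2 = 0 ↔ ¬ (i : ℕ) % 2 = 0 := by
  unfold pr
  split_ifs <;> simp <;> omega

lemma sum_pr (n : ℕ) (f : Fin (2 * n) → ℝ) : ∑ k, f (pr n k) = ∑ k, f k :=
  Equiv.sum_comp (Function.Involutive.toPerm (pr n) (pr_pr n)) f

lemma sum_eq_two_mul_of_pr_invariant (n : ℕ) (f : Fin (2 * n) → ℝ)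
    (hf : ∀ k, f (pr n k) = f k) :
    ∑ k, f k = 2 * ∑ k ∈ univ.filter (fun k : Fin (2 * n) => (k : ℕ) % 2 = 0), f k := by
  have h : ∑ k ∈ univ.filter (fun k : Fin (2 * n) => ¬ (k : ℕ) % 2 = 0), f k =
      ∑ k ∈ univ.filter (fun k : Fin (2 * n) => (k : ℕ) % 2 = 0), f k := by
    rw [sum_filter, sum_filter, ← sum_pr]
    refine sum_congr rfl fun k _ => ?_
    simp only [pr_parity, hf, not_not]
  rw [← sum_filter_add_sum_filter_not univ (fun k : Fin (2 * n) => (k : ℕ) % 2 = 0), h]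
  ring

/-- Under the pairing condition `λ_i λ_{i'} = 1`, the ambient curvature
term of the evolution equation of `*Ω` on `ℂPⁿ × ℂPⁿ` simplifies:
`(1/4) Σ_k Σ_{i ≠ k} λ_i (1 − λ_k²)(1 + 3δ_{i k'}) / ((1 + λ_k²)(λ_i + λ_{i'}))
  = Σ_{k odd} (1 − λ_k²)²/(1 + λ_k²)²`.
("odd" refers to the paper's 1-based indexing, i.e. `(k : ℕ) % 2 = 0` here.) -/
theorem curvature_term_simplification (n : ℕ) (lam : Fin (2 * n) → ℝ)
    (hpos : ∀ i, 0 < lam i)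
    (hpair : ∀ i, lam i * lam (pr n i) = 1) :
    (1 / 4 : ℝ) * ∑ k, ∑ i ∈ univ.filter (fun i : Fin (2 * n) => i ≠ k),
        (lam i * (1 - lam k ^ 2) * (1 + 3 * (if i = pr n k then (1 : ℝ) else 0))) /
          ((1 + lam k ^ 2) * (lam i + lam (pr n i))) =
      ∑ k ∈ univ.filter (fun k : Fin (2 * n) => (k : ℕ) % 2 = 0),
        (1 - lam k ^ 2) ^ 2 / (1 + lam k ^ 2) ^ 2 := by
  have hinv : ∀ i, lam (pr n i) = (lam i)⁻¹ := fun i => eq_inv_of_mul_eq_one_right (hpair i)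
  set a : Fin (2 * n) → ℝ := fun k => (1 - lam k ^ 2) / (1 + lam k ^ 2) with ha
  have ha_pr : ∀ k, a (pr n k) = -a k := by
    intro k
    have h0 := hpos k
    have h1 : (lam k) ^ 2 + 1 ≠ 0 := by positivity
    simp only [ha, hinv]
    field_simp
    ring
  have hb : ∀ i, lam i / (lam i + lam (pr n i)) = (1 - a i) / 2 := by
    intro i
    have h0 := hpos i
    have h1 : (lam i) ^ 2 + 1 ≠ 0 := by positivity
    simp only [ha, hinv]
    field_simp
    ring
  have hsum_a : ∑ k, a k = 0 := by
    have h := sum_pr n a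
    simp only [ha_pr, sum_neg_distrib] at h
    linarith
  have hinner : ∀ k, ∑ i ∈ univ.filter (fun i : Fin (2 * n) => i ≠ k),
        (lam i * (1 - lam k ^ 2) * (1 + 3 * (if i = pr n k then (1 : ℝ) else 0))) /
          ((1 + lam k ^ 2) * (lam i + lam (pr n i))) =
      (∑ i, (1 - a i) / 2 + 1) * a k + 2 * a k ^ 2 := by
    intro k
    have hterm : ∀ i,
        (lam i * (1 - lam k ^ 2) * (1 + 3 * (if i = pr n k then (1 : ℝ) else 0))) /
          ((1 + lam k ^ 2) * (lam i + lam (pr n i))) =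
        a k * ((1 - a i) / 2) + (if i = pr n k then 3 * a k * ((1 - a i) / 2) else 0) := by
      intro i
      have h : ∀ d : ℝ, (lam i * (1 - lam k ^ 2) * d) /
          ((1 + lam k ^ 2) * (lam i + lam (pr n i))) =
          a k * (lam i / (lam i + lam (pr n i))) * d := by
        intro d
        simp only [ha]
        rw [div_mul_div_comm, div_mul_eq_mul_div]
        ring
      rw [h, hb]
      split_ifs <;> ring
    simp only [hterm]
    have herase : univ.filter (fun i : Fin (2 * n) => i ≠ k) = univ.erase k := by
      ext i
      simp
    rw [herase, sum_erase_eq_sub (mem_univ k), sum_add_distrib, ← mul_sum,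
      sum_ite_eq' univ (pr n k), if_pos (mem_univ _), if_neg (pr_ne n k).symm, ha_pr]
    ring
  have hsq : ∀ k, (1 - lam k ^ 2) ^ 2 / (1 + lam k ^ 2) ^ 2 = a k ^ 2 := fun k =>
    (div_pow _ _ _).symm
  simp only [hinner, hsq]
  rw [sum_add_distrib, ← mul_sum, ← mul_sum, hsum_a,
    sum_eq_two_mul_of_pr_invariant n (fun k => a k ^ 2) (fun k => by simp [ha_pr])]
  ring
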